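/- There do not exist a matrix M ∈ S(G133) and real numbers λ_1 < λ_2 < λ_3 such that the characteristic polynomial of M equals (X − λ_1)^3 (X − λ_2) (X − λ_3)^2, and there do not exist such M and λ_1 < λ_2 < λ_3 with characteristic polynomial (X − λ_1)^2 (X − λ_2) (X − λ_3)^3. That is, G133 attains neither ordered multiplicity list (3,1,2) nor (2,1,3). -/

import Mathlib

/-! Suppose the extreme eigenvalues `a < b` of a matrix `M ∈ S(G133)` have multiplicities adding
up to at least `5`, as in both lists. Write `c` for the vertex `4` of the graph (index `3 : Fin 6`),
and `p`, `q` for its two pendant neighbours (indices `4` and `5`).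

* Since `a` and `b` are extreme, `M - a` and `b - M` are positive semidefinite. A zero diagonal entry
  of a positive semidefinite matrix forces its column to vanish, and `M c p ≠ 0`, so `M p p` is
  neither `a` nor `b`; likewise for `q` (`apply_eq_zero_of_diag_eq_min` and
  `apply_eq_zero_of_diag_eq_max`).
* Hence an eigenvector for `a` or `b` that vanishes at `c` also vanishes at `p` and `q`, so it lives
  on the triangle `{1, 2, 3}`, where row `c` of the eigenvalue equation is one nontrivial linear
  relation (`eigenvector_vanishing`).
* The vectors satisfying these conditions form a space of dimension at most `2`. But vanishing at `c`
  costs at most one dimension in each of the two independent eigenspaces, which leaves at least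
  `5 - 2 = 3` dimensions (`finrank_eigenspace_add_lt`).
-/

open Polynomial Matrix

/-- `M ∈ S(G)`: real symmetric matrix whose off-diagonal nonzero pattern is
given exactly by the adjacency of `G`. -/
def inS {V : Type*} (G : SimpleGraph V) (M : Matrix V V ℝ) : Prop :=
  M.IsSymm ∧ ∀ i j : V, i ≠ j → (M i j ≠ 0 ↔ G.Adj i j)

/-- The graph `G133` on vertices 1..6 (encoded as `Fin 6`, vertex `v` is `v.val + 1`). -/
def G133 : SimpleGraph (Fin 6) :=
  SimpleGraph.fromRel (fun i j =>
    ((i : ℕ) + 1, (j : ℕ) + 1) ∈ [(1, 2), (1, 3), (1, 4), (2, 3), (2, 4), (3, 4), (4, 5), (4, 6)])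

/-- If a diagonal entry of a symmetric matrix equals a lower bound of its spectrum, the rest of its
column vanishes: `M - l` is positive semidefinite and its quadratic form is zero at a basis
vector. -/
lemma apply_eq_zero_of_diag_eq_min {n : Type*} [Fintype n] [DecidableEq n] {M : Matrix n n ℝ}
    (hM : M.IsHermitian) {l : ℝ} (hl : ∀ μ ∈ spectrum ℝ M, l ≤ μ) {i j : n} (hij : j ≠ i)
    (hi : M i i = l) : M j i = 0 := by
  have hN : (M - algebraMap ℝ (Matrix n n ℝ) l).IsHermitian := by
    refine hM.sub ?_
    simp [Matrix.IsHermitian, Matrix.algebraMap_eq_diagonal]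
  have hpsd : (M - algebraMap ℝ (Matrix n n ℝ) l).PosSemidef := by
    rw [hN.posSemidef_iff_eigenvalues_nonneg]
    intro k
    have hk := hN.eigenvalues_mem_spectrum_real k
    rw [← spectrum.sub_singleton_eq] at hk
    obtain ⟨μ, hμ, _, rfl, h⟩ := Set.mem_sub.mp hk
    have := hl μ hμ
    simp only [Pi.zero_apply]
    linarith
  have h0 := (hpsd.dotProduct_mulVec_zero_iff (Pi.single i 1)).mp (by
    simp [Matrix.algebraMap_eq_diagonal, hi])
  have := congrFun h0 j
  simpa [Matrix.algebraMap_eq_diagonal, Matrix.diagonal_apply_ne _ hij] using this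

lemma apply_eq_zero_of_diag_eq_max {n : Type*} [Fintype n] [DecidableEq n] {M : Matrix n n ℝ}
    (hM : M.IsHermitian) {l : ℝ} (hl : ∀ μ ∈ spectrum ℝ M, μ ≤ l) {i j : n} (hij : j ≠ i)
    (hi : M i i = l) : M j i = 0 := by
  have := apply_eq_zero_of_diag_eq_min hM.neg (l := -l) (i := i) (j := j) (fun μ hμ => by
    rw [← spectrum.neg_eq, Set.mem_neg] at hμ
    linarith [hl _ hμ]) hij (by simp [hi])
  simpa using this

/-- For a real symmetric matrix, geometric and algebraic multiplicities agree. -/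
lemma finrank_eigenspace_eq_rootMultiplicity {n : Type*} [Fintype n] [DecidableEq n]
    {M : Matrix n n ℝ} (hM : M.IsHermitian) (l : ℝ) :
    Module.finrank ℝ (Module.End.eigenspace (Matrix.toEuclideanLin M) l) =
      M.charpoly.rootMultiplicity l := by
  have hs := (Matrix.isSymmetric_toEuclideanLin_iff.mpr hM).isFinitelySemisimple
  rw [← hs.maxGenEigenspace_eq_eigenspace, LinearMap.finrank_maxGenEigenspace_eq]
  exact congrArg _ (Matrix.charpoly_toLin M (PiLp.basisFun 2 ℝ n))

/-- An eigenvector that vanishes at the cut vertex also vanishes at the pendant vertices, provided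
their diagonal entries differ from the eigenvalue; the row of the cut vertex then gives a linear
relation between the three remaining coordinates. -/
lemma eigenvector_vanishing {M : Matrix (Fin 6) (Fin 6) ℝ} (hM : inS G133 M) {l : ℝ}
    (h4 : M 4 4 ≠ l) (h5 : M 5 5 ≠ l) {v : EuclideanSpace ℝ (Fin 6)}
    (hv : v ∈ Module.End.eigenspace (Matrix.toEuclideanLin M) l) (h3 : v 3 = 0) :
    v 4 = 0 ∧ v 5 = 0 ∧ M 3 0 * v 0 + M 3 1 * v 1 + M 3 2 * v 2 = 0 := by
  have hz : ∀ i j : Fin 6, i ≠ j → ¬ G133.Adj i j → M i j = 0 := fun i j hij hn => by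
    by_contra h
    exact hn ((hM.2 i j hij).mp h)
  have hrow : ∀ i, ∑ j, M i j * v j = l * v i := fun i => by
    have := congrArg (fun w : EuclideanSpace ℝ (Fin 6) => w i) (Module.End.mem_eigenspace_iff.mp hv)
    simpa [Matrix.toLpLin_apply, Matrix.mulVec, dotProduct] using this
  have e4 : v 4 = 0 := by
    have h := hrow 4
    rw [Fin.sum_univ_six, hz 4 0 (by decide) (by simp [G133]),
      hz 4 1 (by decide) (by simp [G133]), hz 4 2 (by decide) (by simp [G133]),
      hz 4 5 (by decide) (by simp [G133]), h3] at h
    have : (M 4 4 - l) * v 4 = 0 := by linarith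
    exact (mul_eq_zero.mp this).resolve_left (sub_ne_zero.mpr h4)
  have e5 : v 5 = 0 := by
    have h := hrow 5
    rw [Fin.sum_univ_six, hz 5 0 (by decide) (by simp [G133]),
      hz 5 1 (by decide) (by simp [G133]), hz 5 2 (by decide) (by simp [G133]),
      hz 5 4 (by decide) (by simp [G133]), h3] at h
    have : (M 5 5 - l) * v 5 = 0 := by linarith
    exact (mul_eq_zero.mp this).resolve_left (sub_ne_zero.mpr h5)
  refine ⟨e4, e5, ?_⟩
  have h := hrow 3
  rw [Fin.sum_univ_six, h3, e4, e5] at h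
  linarith

/-- If `a ≠ b` bound the spectrum of a matrix in `S(G133)` from below and above, their
eigenspaces have total dimension at most `4`. -/
lemma finrank_eigenspace_add_lt {M : Matrix (Fin 6) (Fin 6) ℝ} (hM : inS G133 M) {a b : ℝ}
    (hab : a ≠ b) (ha : ∀ μ ∈ spectrum ℝ M, a ≤ μ) (hb : ∀ μ ∈ spectrum ℝ M, μ ≤ b) :
    Module.finrank ℝ (Module.End.eigenspace (Matrix.toEuclideanLin M) a) +
      Module.finrank ℝ (Module.End.eigenspace (Matrix.toEuclideanLin M) b) < 5 := by
  have hH : M.IsHermitian := by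
    rw [Matrix.IsHermitian, Matrix.conjTranspose_eq_transpose_of_trivial]
    exact hM.1
  have n34 : M 3 4 ≠ 0 := (hM.2 3 4 (by decide)).mpr (by simp [G133])
  have n35 : M 3 5 ≠ 0 := (hM.2 3 5 (by decide)).mpr (by simp [G133])
  have n32 : M 3 2 ≠ 0 := (hM.2 3 2 (by decide)).mpr (by simp [G133])
  have a4 : M 4 4 ≠ a := fun h => n34 (apply_eq_zero_of_diag_eq_min hH ha (by decide) h)
  have a5 : M 5 5 ≠ a := fun h => n35 (apply_eq_zero_of_diag_eq_min hH ha (by decide) h)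
  have b4 : M 4 4 ≠ b := fun h => n34 (apply_eq_zero_of_diag_eq_max hH hb (by decide) h)
  have b5 : M 5 5 ≠ b := fun h => n35 (apply_eq_zero_of_diag_eq_max hH hb (by decide) h)
  set K := Module.End.eigenspace (Matrix.toEuclideanLin M) a
  set L := Module.End.eigenspace (Matrix.toEuclideanLin M) b
  have hdisj : Disjoint K L := Module.End.disjoint_genEigenspace _ hab 1 1
  let π (i : Fin 6) : EuclideanSpace ℝ (Fin 6) →ₗ[ℝ] ℝ := (EuclideanSpace.proj i).toLinearMap
  let fK : (K × L) →ₗ[ℝ] EuclideanSpace ℝ (Fin 6) := K.subtype ∘ₗ LinearMap.fst ℝ K L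
  let fL : (K × L) →ₗ[ℝ] EuclideanSpace ℝ (Fin 6) := L.subtype ∘ₗ LinearMap.snd ℝ K L
  -- If `x ∈ K` and `y ∈ L` vanish at the cut vertex and `x + y` vanishes at two vertices of the
  -- triangle, then `x + y = 0`, so these four functionals separate the points of `K × L`.
  let f : (K × L) →ₗ[ℝ] (Fin 4 → ℝ) :=
    LinearMap.pi ![π 3 ∘ₗ fK, π 3 ∘ₗ fL, π 0 ∘ₗ (fK + fL), π 1 ∘ₗ (fK + fL)]
  have hf : Function.Injective f := by
    rw [← LinearMap.ker_eq_bot, LinearMap.ker_eq_bot']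
    rintro ⟨⟨x, hx⟩, ⟨y, hy⟩⟩ h
    have hx3 : x 3 = 0 := by simpa [f, π, fK] using congrFun h 0
    have hy3 : y 3 = 0 := by simpa [f, π, fL] using congrFun h 1
    have h0 : x 0 + y 0 = 0 := by simpa [f, π, fK, fL] using congrFun h 2
    have h1 : x 1 + y 1 = 0 := by simpa [f, π, fK, fL] using congrFun h 3
    obtain ⟨hx4, hx5, hxr⟩ := eigenvector_vanishing hM a4 a5 hx hx3
    obtain ⟨hy4, hy5, hyr⟩ := eigenvector_vanishing hM b4 b5 hy hy3
    have h2 : x 2 + y 2 = 0 := by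
      have : M 3 2 * (x 2 + y 2) = 0 := by linear_combination hxr + hyr - M 3 0 * h0 - M 3 1 * h1
      exact (mul_eq_zero.mp this).resolve_left n32
    have hxy : x + y = 0 := by
      ext i
      fin_cases i <;> simp [*]
    have hx0 : x = 0 := by
      refine (Submodule.disjoint_def.mp hdisj) x hx ?_
      rw [eq_neg_of_add_eq_zero_left hxy]
      exact L.neg_mem hy
    have hy0 : y = 0 := by simpa [hx0] using hxy
    simp [hx0, hy0]
  have := LinearMap.finrank_le_finrank_of_injective hf
  rw [Module.finrank_prod, Module.finrank_fin_fun] at this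
  omega

/-- The same bound in terms of the characteristic polynomial: both multiplicity lists are instances,
with `m + n = 5`. -/
lemma not_charpoly_eq {M : Matrix (Fin 6) (Fin 6) ℝ} (hM : inS G133 M) {a c b : ℝ} (hac : a < c)
    (hcb : c < b) {m n : ℕ} (hmn : 5 ≤ m + n) :
    M.charpoly ≠ (X - C a) ^ m * (X - C c) * (X - C b) ^ n := by
  intro h
  have hH : M.IsHermitian := by
    rw [Matrix.IsHermitian, Matrix.conjTranspose_eq_transpose_of_trivial]
    exact hM.1
  have hspec : ∀ μ ∈ spectrum ℝ M, μ = a ∨ μ = c ∨ μ = b := by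
    intro μ hμ
    rw [Matrix.mem_spectrum_iff_isRoot_charpoly, h] at hμ
    simp only [IsRoot.def, eval_mul, eval_pow, eval_sub, eval_X, eval_C, mul_eq_zero] at hμ
    rcases hμ with (hμ | hμ) | hμ
    · exact Or.inl (sub_eq_zero.mp (eq_zero_of_pow_eq_zero hμ))
    · exact Or.inr (Or.inl (sub_eq_zero.mp hμ))
    · exact Or.inr (Or.inr (sub_eq_zero.mp (eq_zero_of_pow_eq_zero hμ)))
  have hlt := finrank_eigenspace_add_lt hM (hac.trans hcb).ne
    (fun μ hμ => by rcases hspec μ hμ with rfl | rfl | rfl <;> linarith)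
    (fun μ hμ => by rcases hspec μ hμ with rfl | rfl | rfl <;> linarith)
  rw [finrank_eigenspace_eq_rootMultiplicity hH, finrank_eigenspace_eq_rootMultiplicity hH] at hlt
  have hne : M.charpoly ≠ 0 := M.charpoly_monic.ne_zero
  have h1 : m ≤ M.charpoly.rootMultiplicity a := by
    rw [le_rootMultiplicity_iff hne, h, mul_assoc]
    exact dvd_mul_right _ _
  have h2 : n ≤ M.charpoly.rootMultiplicity b := by
    rw [le_rootMultiplicity_iff hne, h]
    exact dvd_mul_left _ _
  omega

theorem G133_not_312_213 :
    (¬ ∃ (M : Matrix (Fin 6) (Fin 6) ℝ) (l₁ l₂ l₃ : ℝ),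
        inS G133 M ∧ l₁ < l₂ ∧ l₂ < l₃ ∧
        M.charpoly = (X - C l₁) ^ 3 * (X - C l₂) * (X - C l₃) ^ 2) ∧
    (¬ ∃ (M : Matrix (Fin 6) (Fin 6) ℝ) (l₁ l₂ l₃ : ℝ),
        inS G133 M ∧ l₁ < l₂ ∧ l₂ < l₃ ∧
        M.charpoly = (X - C l₁) ^ 2 * (X - C l₂) * (X - C l₃) ^ 3) := by
  constructor
  · rintro ⟨M, l₁, l₂, l₃, hM, h12, h23, h⟩
    exact not_charpoly_eq hM h12 h23 (by norm_num) h
  · rintro ⟨M, l₁, l₂, l₃, hM, h12, h23, h⟩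
    exact not_charpoly_eq hM h12 h23 (by norm_num) h
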